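/- Let 𝕊 denote symmetric 2×2 real matrices and let τ : ℝ² → 𝕊 be a polynomial matrix field of total degree at most 3 whose row-wise divergence vanishes identically: ∂₁τᵢ₁ + ∂₂τᵢ₂ = 0 for i = 1, 2. Then there exists a polynomial q : ℝ² → ℝ of total degree at most 5 such that τ = J q, i.e., τ₁₁ = ∂₂∂₂q, τ₁₂ = τ₂₁ = −∂₁∂₂q, and τ₂₂ = ∂₁∂₁q. -/

import Mathlib

/-- The `i`-th partial derivative of a scalar function on `ℝ²`. -/
noncomputable def pd2 (i : Fin 2) (f : (Fin 2 → ℝ) → ℝ) : (Fin 2 → ℝ) → ℝ :=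
  fun x => fderiv ℝ f x (Pi.single i 1)

/-- `PolyMat2 p` : matrix fields on `ℝ²` whose entries are polynomial functions of
total degree at most `p`. -/
def PolyMat2 (p : ℕ) : Set ((Fin 2 → ℝ) → Matrix (Fin 2) (Fin 2) ℝ) :=
  { τ | ∃ q : Matrix (Fin 2) (Fin 2) (MvPolynomial (Fin 2) ℝ),
      (∀ i j, (q i j).totalDegree ≤ p) ∧ ∀ x i j, τ x i j = MvPolynomial.eval x (q i j) }

/-!
The field `J q` is the adjugate of the Hessian of `q`. Taking adjugates of `2 × 2` matrices is
linear and involutive, so `τ = J q` says that `adj τ` is the Hessian of `q`, and for symmetric `τ`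
the vanishing of `div τ` says exactly that every row of `adj τ` is curl-free. The Poincaré lemma
integrates the rows to a vector field, which is again curl-free by symmetry; integrating once more
yields `q`. The potential `∑ᵢ xᵢ ∫₀¹ ωᵢ(tx) dt` of a curl-free polynomial field `ω` is a polynomial
whose degree exceeds that of `ω` by at most one.
-/

open MvPolynomial

section PoincareLemma

variable {σ K : Type*} [Field K]

/-- The average `∫₀¹ p(tx) dt` of a polynomial along the segment from the origin to `x`, encoded
algebraically: it divides each coefficient of degree `d` by `d + 1` (with value `0` where
`d + 1` vanishes in `K`). It provides the potential in the Poincaré lemma. -/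
noncomputable def rayAverage (p : MvPolynomial σ K) : MvPolynomial σ K :=
  ∑ m ∈ p.support, monomial m (coeff m p / (m.degree + 1))

theorem coeff_rayAverage (p : MvPolynomial σ K) (m : σ →₀ ℕ) :
    coeff m (rayAverage p) = coeff m p / (m.degree + 1) := by
  classical
  simp +contextual [rayAverage, coeff_sum, coeff_monomial, eq_comm]

theorem totalDegree_rayAverage_le (p : MvPolynomial σ K) :
    (rayAverage p).totalDegree ≤ p.totalDegree := by
  refine totalDegree_le_of_support_subset fun m hm => ?_
  rw [mem_support_iff, coeff_rayAverage] at hm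
  exact mem_support_iff.mpr (div_ne_zero_iff.mp hm).1

theorem pderiv_rayAverage_eq_of_pderiv_eq {p r : MvPolynomial σ K} {i j : σ}
    (h : pderiv i p = pderiv j r) : pderiv i (rayAverage p) = pderiv j (rayAverage r) := by
  ext m
  have hm : coeff (m + Finsupp.single i 1) p * (m i + 1) =
      coeff (m + Finsupp.single j 1) r * (m j + 1) := by
    simpa only [coeff_pderiv] using congrArg (coeff m) h
  simp only [coeff_pderiv, coeff_rayAverage, map_add, Finsupp.degree_single, div_mul_eq_mul_div, hm]

theorem coeff_sum_X_mul_pderiv {R : Type*} [CommSemiring R] [Fintype σ] (p : MvPolynomial σ R)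
    (m : σ →₀ ℕ) : coeff m (∑ i, X i * pderiv i p) = m.degree * coeff m p := by
  classical
  induction p using MvPolynomial.induction_on' with
  | monomial k a =>
    rw [(isHomogeneous_monomial a rfl).sum_X_mul_pderiv, coeff_smul, coeff_monomial, nsmul_eq_mul]
    split_ifs with hkm
    · rw [hkm]
    · simp only [mul_zero]
  | add p r hp hr => simp only [map_add, mul_add, Finset.sum_add_distrib, coeff_add, hp, hr]

theorem rayAverage_add_sum_X_mul_pderiv [CharZero K] [Fintype σ] (p : MvPolynomial σ K) :
    rayAverage p + ∑ i, X i * pderiv i (rayAverage p) = p := by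
  ext m
  have hm : (m.degree : K) + 1 ≠ 0 := Nat.cast_add_one_ne_zero _
  rw [coeff_add, coeff_sum_X_mul_pderiv, coeff_rayAverage]
  field_simp
  ring

theorem exists_pderiv_eq_of_curl_free [CharZero K] [Finite σ] {n : ℕ}
    {ω : σ → MvPolynomial σ K} (hdeg : ∀ i, (ω i).totalDegree ≤ n)
    (hcurl : ∀ i j, pderiv i (ω j) = pderiv j (ω i)) :
    ∃ Q : MvPolynomial σ K, Q.totalDegree ≤ n + 1 ∧ ∀ i, pderiv i Q = ω i := by
  classical
  have := Fintype.ofFinite σ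
  refine ⟨∑ i, X i * rayAverage (ω i), totalDegree_finsetSum_le fun i _ => ?_, fun j => ?_⟩
  · calc (X i * rayAverage (ω i)).totalDegree
        ≤ (X i : MvPolynomial σ K).totalDegree + (rayAverage (ω i)).totalDegree :=
          totalDegree_mul _ _
      _ ≤ 1 + n := by
          rw [totalDegree_X]
          gcongr
          exact (totalDegree_rayAverage_le _).trans (hdeg i)
      _ = n + 1 := add_comm _ _
  · calc pderiv j (∑ i, X i * rayAverage (ω i))
        = rayAverage (ω j) + ∑ i, X i * pderiv j (rayAverage (ω i)) := by
          simp [pderiv_X, Pi.single_apply, Finset.sum_add_distrib, add_comm]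
      _ = rayAverage (ω j) + ∑ i, X i * pderiv i (rayAverage (ω j)) := by
          simp only [fun i => pderiv_rayAverage_eq_of_pderiv_eq (hcurl j i)]
      _ = ω j := rayAverage_add_sum_X_mul_pderiv _

theorem exists_pderiv_pderiv_eq_of_curl_free [CharZero K] [Finite σ] {n : ℕ}
    {H : Matrix σ σ (MvPolynomial σ K)} (hsymm : H.IsSymm)
    (hdeg : ∀ i j, (H i j).totalDegree ≤ n)
    (hcurl : ∀ i j k, pderiv j (H i k) = pderiv k (H i j)) :
    ∃ Q : MvPolynomial σ K, Q.totalDegree ≤ n + 2 ∧ ∀ i j, pderiv i (pderiv j Q) = H i j := by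
  choose u hu_deg hu using fun i => exists_pderiv_eq_of_curl_free (hdeg i) (hcurl i)
  have hu_curl (i j : σ) : pderiv i (u j) = pderiv j (u i) := by
    rw [hu, hu, hsymm.apply]
  obtain ⟨Q, hQ_deg, hQ⟩ := exists_pderiv_eq_of_curl_free hu_deg hu_curl
  exact ⟨Q, hQ_deg, fun i j => by rw [hQ, hu, hsymm.apply]⟩

end PoincareLemma

theorem exists_pderiv_pderiv_eq_adjugate_of_div_free {K : Type*} [Field K] [CharZero K] {n : ℕ}
    {T : Matrix (Fin 2) (Fin 2) (MvPolynomial (Fin 2) K)} (hsymm : T.IsSymm)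
    (hdeg : ∀ i j, (T i j).totalDegree ≤ n)
    (hdiv : ∀ i, pderiv 0 (T i 0) + pderiv 1 (T i 1) = 0) :
    ∃ Q : MvPolynomial (Fin 2) K, Q.totalDegree ≤ n + 2 ∧
      ∀ i j, pderiv i (pderiv j Q) = T.adjugate i j := by
  have hT : T 1 0 = T 0 1 := hsymm.apply 0 1
  have hdiv₀ : pderiv 0 (T 0 0) = -pderiv 1 (T 0 1) := eq_neg_of_add_eq_zero_left (hdiv 0)
  have hdiv₁ : pderiv 1 (T 1 1) = -pderiv 0 (T 0 1) := by
    rw [← hT]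
    exact eq_neg_of_add_eq_zero_right (hdiv 1)
  refine exists_pderiv_pderiv_eq_of_curl_free ?_ (fun i j => ?_) (fun i j k => ?_)
  · rw [Matrix.IsSymm, Matrix.adjugate_transpose, hsymm]
  · rw [Matrix.adjugate_fin_two]
    fin_cases i <;> fin_cases j <;> simp [hdeg]
  · rw [Matrix.adjugate_fin_two]
    fin_cases i <;> fin_cases j <;> fin_cases k <;> simp [hT, hdiv₀, hdiv₁]

theorem hasFDerivAt_eval {σ 𝕜 : Type*} [Fintype σ] [NontriviallyNormedField 𝕜]
    (p : MvPolynomial σ 𝕜) (x : σ → 𝕜) :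
    HasFDerivAt (fun y => eval y p)
      (∑ i, eval x (pderiv i p) • ContinuousLinearMap.proj (R := 𝕜) (φ := fun _ : σ => 𝕜) i) x := by
  classical
  induction p using MvPolynomial.induction_on with
  | C a =>
    simp only [eval_C]
    refine (hasFDerivAt_const a x).congr_fderiv ?_
    ext v
    simp
  | add p r hp hr =>
    simp only [map_add]
    refine (hp.fun_add hr).congr_fderiv ?_
    ext v
    simp [add_mul, Finset.sum_add_distrib]
  | mul_X p j hp =>
    simp only [map_mul, eval_X]
    refine (hp.mul (hasFDerivAt_apply j x)).congr_fderiv ?_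
    ext v
    simp [pderiv_X, Pi.single_apply, add_mul, Finset.sum_add_distrib, Finset.mul_sum, mul_assoc,
      apply_ite (eval x)]

theorem fderiv_eval_single {σ 𝕜 : Type*} [Finite σ] [DecidableEq σ] [NontriviallyNormedField 𝕜]
    (p : MvPolynomial σ 𝕜) (x : σ → 𝕜) (i : σ) :
    fderiv 𝕜 (fun y => eval y p) x (Pi.single i 1) = eval x (pderiv i p) := by
  have := Fintype.ofFinite σ
  simp [(hasFDerivAt_eval p x).fderiv, Pi.single_apply]

theorem pd2_eval (i : Fin 2) (p : MvPolynomial (Fin 2) ℝ) :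
    pd2 i (fun y => eval y p) = fun x => eval x (pderiv i p) :=
  funext fun x => fderiv_eval_single p x i

theorem divergence_free_symmetric_cubic_is_Jq_general {n : ℕ}
    (τ : (Fin 2 → ℝ) → Matrix (Fin 2) (Fin 2) ℝ)
    (hsymm : ∀ x, (τ x).IsSymm)
    (hpoly : τ ∈ PolyMat2 n)
    (hdiv : ∀ x, ∀ i : Fin 2,
      pd2 0 (fun y => τ y i 0) x + pd2 1 (fun y => τ y i 1) x = 0) :
    ∃ q : (Fin 2 → ℝ) → ℝ,
      (∃ Q : MvPolynomial (Fin 2) ℝ, Q.totalDegree ≤ n + 2 ∧ ∀ x, q x = eval x Q) ∧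
      ∀ x, τ x 0 0 = pd2 1 (pd2 1 q) x ∧
           τ x 0 1 = -(pd2 0 (pd2 1 q) x) ∧
           τ x 1 0 = -(pd2 0 (pd2 1 q) x) ∧
           τ x 1 1 = pd2 0 (pd2 0 q) x := by
  obtain ⟨T, hT_deg, hT⟩ := hpoly
  have hT_symm : T.IsSymm := Matrix.IsSymm.ext fun i j => MvPolynomial.funext fun x => by
    rw [← hT, ← hT, (hsymm x).apply]
  have hT_div (i : Fin 2) : pderiv 0 (T i 0) + pderiv 1 (T i 1) = 0 :=
    MvPolynomial.funext fun x => by simpa only [hT, pd2_eval, map_add, map_zero] using hdiv x i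
  obtain ⟨Q, hQ_deg, hQ⟩ := exists_pderiv_pderiv_eq_adjugate_of_div_free hT_symm hT_deg hT_div
  refine ⟨fun x => eval x Q, ⟨Q, hQ_deg, fun _ => rfl⟩, fun x => ?_⟩
  have hT_offdiag : T 1 0 = T 0 1 := hT_symm.apply 0 1
  simp [pd2_eval, hQ, hT, Matrix.adjugate_fin_two, hT_offdiag]

/-- Polynomial-level exactness of the two-dimensional elasticity complex: every
symmetric cubic matrix field with identically vanishing row-wise divergence is
`J q` for some quintic polynomial `q`. -/
theorem divergence_free_symmetric_cubic_is_Jq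
    (τ : (Fin 2 → ℝ) → Matrix (Fin 2) (Fin 2) ℝ)
    (hsymm : ∀ x, (τ x).IsSymm)
    (hpoly : τ ∈ PolyMat2 3)
    (hdiv : ∀ x, ∀ i : Fin 2,
      pd2 0 (fun y => τ y i 0) x + pd2 1 (fun y => τ y i 1) x = 0) :
    ∃ q : (Fin 2 → ℝ) → ℝ,
      (∃ Q : MvPolynomial (Fin 2) ℝ, Q.totalDegree ≤ 5 ∧
        ∀ x, q x = MvPolynomial.eval x Q) ∧
      ∀ x, τ x 0 0 = pd2 1 (pd2 1 q) x ∧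
           τ x 0 1 = -(pd2 0 (pd2 1 q) x) ∧
           τ x 1 0 = -(pd2 0 (pd2 1 q) x) ∧
           τ x 1 1 = pd2 0 (pd2 0 q) x :=
  divergence_free_symmetric_cubic_is_Jq_general τ hsymm hpoly hdiv
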